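/- arXiv:2006.05227 — 3 statements merged into one kernel-verified Lean document; each statement's English description precedes it below -/
import Mathlib

section
/- For all natural numbers n, k ≥ 1 there exists a constant C > 0, depending only on n and k, with the following property. Let A : Fin n → Fin n → Fin (k+1) → ℝ satisfy A_{ijα} = A_{jiα} for all i, j, α, assume the frame is adapted to the mean curvature, i.e., Σ_i A_{iiα} = 0 for every α ≠ 0 and H := Σ_i A_{ii0} > 0, and write h_{ij} := A_{ij0}, |A|² := Σ_{i,j,α} A_{ijα}², |Â|² := Σ_{i,j,α≠0} A_{ijα}², |h|² := Σ_{i,j} h_{ij}². Define E_{klijα} := Σ_{p,β} [ A_{klβ}A_{ipβ}A_{jpα} + A_{lkβ}A_{jpβ}A_{ipα} − A_{ijβ}A_{kpβ}A_{lpα} − A_{jiβ}A_{lpβ}A_{kpα} + A_{jlβ}A_{ipβ}A_{kpα} + A_{ikβ}A_{jpβ}A_{lpα} + A_{jkβ}A_{ipβ}A_{lpα} + A_{ilβ}A_{jpβ}A_{kpα} − A_{ilβ}A_{kpβ}A_{jpα} − A_{jkβ}A_{lpβ}A_{ipα} − A_{jlβ}A_{kpβ}A_{ipα} − A_{ikβ}A_{lpβ}A_{jpα}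 ] and |E|² := Σ_{k,l,i,j,α} E_{klijα}². Then |E|² ≥ 8·|h|²·tr(h⁴) − 8·tr(h³)² − C·|A|⁵·|Â|, where tr(h^m) denotes the trace of the m-th power of the symmetric matrix h. -/
/-!
Only the component `α = 0` of `E` is needed. There, the summands with `β = 0` involve `h` alone and,
`h` being symmetric, eight of the twelve terms cancel, leaving
`F_{KLIJ} = 2 (h_{KL} (h²)_{IJ} - h_{IJ} (h²)_{KL})` (`sum_simonsTerm_zero`). Expanding the square,
`|F|² = 8 |h|² tr(h⁴) - 8 tr(h³)²` exactly (`sum_sq_antisymm`).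

The summands with `β ≠ 0` form a remainder `R` which is quadratic in `Â`, so that `|F| ≤ c |A|³`
and `|R| ≤ c |A|² |Â|` entrywise (`abs_simonsTerm_le`). Hence
`E_{KLIJ0}² = (F + R)² ≥ F² - 2 |F| |R| ≥ F² - C |A|⁵ |Â|`, and summing over `K, L, I, J` gives the
claim.
-/

/-- The summand of `E_{KLIJ0}` with contracted tangential index `p` and normal index `β`. -/
def simonsTerm {n k : ℕ} (A : Fin n → Fin n → Fin (k + 1) → ℝ) (K L I J p : Fin n)
    (β : Fin (k + 1)) : ℝ :=
  A K L β * A I p β * A J p 0 + A L K β * A J p β * A I p 0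
    - A I J β * A K p β * A L p 0 - A J I β * A L p β * A K p 0
    + A J L β * A I p β * A K p 0 + A I K β * A J p β * A L p 0
    + A J K β * A I p β * A L p 0 + A I L β * A J p β * A K p 0
    - A I L β * A K p β * A J p 0 - A J K β * A L p β * A I p 0
    - A J L β * A K p β * A I p 0 - A I K β * A L p β * A J p 0

lemma abs_simonsTerm_le {n k : ℕ} (A : Fin n → Fin n → Fin (k + 1) → ℝ) (K L I J p : Fin n)
    (β : Fin (k + 1)) {x a : ℝ} (hx : ∀ i j, |A i j β| ≤ x) (ha : ∀ i j, |A i j 0| ≤ a) :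
    |simonsTerm A K L I J p β| ≤ 12 * (x * x * a) := by
  have key : ∀ i j i' j' i'' j'', |A i j β * A i' j' β * A i'' j'' 0| ≤ x * x * a := by
    intro i j i' j' i'' j''
    have hx0 : 0 ≤ x := (abs_nonneg _).trans (hx i j)
    rw [abs_mul, abs_mul]
    exact mul_le_mul (mul_le_mul (hx _ _) (hx _ _) (abs_nonneg _) hx0) (ha _ _) (abs_nonneg _)
      (mul_nonneg hx0 hx0)
  have h1 := abs_le.mp (key K L I p J p)
  have h2 := abs_le.mp (key L K J p I p)
  have h3 := abs_le.mp (key I J K p L p)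
  have h4 := abs_le.mp (key J I L p K p)
  have h5 := abs_le.mp (key J L I p K p)
  have h6 := abs_le.mp (key I K J p L p)
  have h7 := abs_le.mp (key J K I p L p)
  have h8 := abs_le.mp (key I L J p K p)
  have h9 := abs_le.mp (key I L K p J p)
  have h10 := abs_le.mp (key J K L p I p)
  have h11 := abs_le.mp (key J L K p I p)
  have h12 := abs_le.mp (key I K L p J p)
  unfold simonsTerm
  rw [abs_le]
  constructor <;> linarith

lemma sum_simonsTerm_zero {n k : ℕ} (A : Fin n → Fin n → Fin (k + 1) → ℝ)
    (hA : ∀ i j α, A i j α = A j i α) (K L I J : Fin n) :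
    ∑ p, simonsTerm A K L I J p 0 =
      2 * (A K L 0 * (∑ p, A I p 0 * A J p 0) - A I J 0 * ∑ p, A K p 0 * A L p 0) := by
  rw [Finset.mul_sum, Finset.mul_sum, ← Finset.sum_sub_distrib, Finset.mul_sum]
  refine Finset.sum_congr rfl fun p _ => ?_
  unfold simonsTerm
  rw [hA L K, hA J I]
  ring

/-- The squared norm of the antisymmetrization `u ⊗ v - v ⊗ u`, as in Lagrange's identity. -/
lemma sum_sq_antisymm {n : ℕ} (u v : Fin n → Fin n → ℝ) :
    ∑ K, ∑ L, ∑ I, ∑ J, (2 * (u K L * v I J - u I J * v K L)) ^ 2 =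
      8 * (∑ i, ∑ j, u i j ^ 2) * (∑ i, ∑ j, v i j ^ 2) - 8 * (∑ i, ∑ j, u i j * v i j) ^ 2 := by
  have inner : ∀ K L, ∑ I, ∑ J, (2 * (u K L * v I J - u I J * v K L)) ^ 2 =
      4 * (∑ i, ∑ j, v i j ^ 2) * u K L ^ 2 + 4 * (∑ i, ∑ j, u i j ^ 2) * v K L ^ 2
        - 8 * (∑ i, ∑ j, u i j * v i j) * (u K L * v K L) := by
    intro K L
    simp only [Finset.mul_sum, Finset.sum_mul, ← Finset.sum_add_distrib, ← Finset.sum_sub_distrib]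
    refine Finset.sum_congr rfl fun I _ => Finset.sum_congr rfl fun J _ => ?_
    ring
  simp only [inner, Finset.sum_add_distrib, Finset.sum_sub_distrib, ← Finset.mul_sum]
  ring

lemma trace_pow_three_of_symm {n : ℕ} (a : Fin n → Fin n → ℝ) (ha : ∀ i j, a i j = a j i) :
    ((Matrix.of a) ^ 3).trace = ∑ i, ∑ j, a i j * ∑ p, a i p * a j p := by
  simp only [pow_succ', pow_zero, mul_one, Matrix.trace, Matrix.diag_apply, Matrix.mul_apply,
    Matrix.of_apply]
  refine Finset.sum_congr rfl fun i _ => Finset.sum_congr rfl fun j _ => ?_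
  congr 1
  refine Finset.sum_congr rfl fun p _ => ?_
  rw [ha p i, mul_comm]

lemma trace_pow_four_of_symm {n : ℕ} (a : Fin n → Fin n → ℝ) (ha : ∀ i j, a i j = a j i) :
    ((Matrix.of a) ^ 4).trace = ∑ i, ∑ j, (∑ p, a i p * a j p) ^ 2 := by
  have h2 : ∀ i j, (Matrix.of a * Matrix.of a) i j = ∑ p, a i p * a j p := by
    intro i j
    rw [Matrix.mul_apply]
    refine Finset.sum_congr rfl fun p _ => ?_
    rw [Matrix.of_apply, Matrix.of_apply, ha p j]
  rw [show (4 : ℕ) = 2 + 2 from rfl, pow_add, pow_two]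
  simp only [Matrix.trace, Matrix.diag_apply]
  refine Finset.sum_congr rfl fun i _ => ?_
  rw [Matrix.mul_apply]
  refine Finset.sum_congr rfl fun j _ => ?_
  rw [h2, h2, pow_two]
  congr 1
  exact Finset.sum_congr rfl fun p _ => mul_comm _ _

lemma abs_le_sqrt_sum {n k : ℕ} (A : Fin n → Fin n → Fin (k + 1) → ℝ) (s : Finset (Fin (k + 1)))
    (i j : Fin n) {α : Fin (k + 1)} (hα : α ∈ s) :
    |A i j α| ≤ Real.sqrt (∑ i, ∑ j, ∑ α ∈ s, (A i j α) ^ 2) := by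
  apply Real.abs_le_sqrt
  calc A i j α ^ 2 ≤ ∑ α ∈ s, A i j α ^ 2 :=
        Finset.single_le_sum (f := fun α => A i j α ^ 2) (fun _ _ => sq_nonneg _) hα
    _ ≤ ∑ j, ∑ α ∈ s, A i j α ^ 2 :=
        Finset.single_le_sum (f := fun j => ∑ α ∈ s, A i j α ^ 2)
          (fun _ _ => Finset.sum_nonneg fun _ _ => sq_nonneg _) (Finset.mem_univ j)
    _ ≤ _ :=
        Finset.single_le_sum (f := fun i => ∑ j, ∑ α ∈ s, A i j α ^ 2)
          (fun _ _ => Finset.sum_nonneg fun _ _ => Finset.sum_nonneg fun _ _ => sq_nonneg _)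
          (Finset.mem_univ i)

/-- Key lemma of Section 3: there is `C = C(n,k) > 0` such that for the second
fundamental form `A` (in an adapted frame: `Σ_i A_{iiα} = 0` for `α ≠ 0` and
`H = Σ_i A_{ii0} > 0`), the cubic error tensor `E` of the symmetrized Simons identity
satisfies `|E|² ≥ 8|h|²·tr(h⁴) − 8·tr(h³)² − C·|A|⁵·|Â|`. -/
theorem simons_error_tensor_lower_bound (n k : ℕ) (hn : 1 ≤ n) (hk : 1 ≤ k) :
    ∃ C : ℝ, 0 < C ∧
      ∀ A : Fin n → Fin n → Fin (k + 1) → ℝ,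
        (∀ i j α, A i j α = A j i α) →
        (∀ α : Fin (k + 1), α ≠ 0 → (∑ i, A i i α) = 0) →
        0 < ∑ i, A i i 0 →
        let h : Matrix (Fin n) (Fin n) ℝ := Matrix.of fun i j => A i j 0
        let E : Fin n → Fin n → Fin n → Fin n → Fin (k + 1) → ℝ :=
          fun K L I J α =>
            ∑ p, ∑ β,
              (A K L β * A I p β * A J p α + A L K β * A J p β * A I p α
                - A I J β * A K p β * A L p α - A J I β * A L p β * A K p α
                + A J L β * A I p β * A K p α + A I K β * A J p β * A L p α
                + A J K β * A I p β * A L p α + A I L β * A J p β * A K p α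
                - A I L β * A K p β * A J p α - A J K β * A L p β * A I p α
                - A J L β * A K p β * A I p α - A I K β * A L p β * A J p α)
        (∑ K, ∑ L, ∑ I, ∑ J, ∑ α, (E K L I J α) ^ 2) ≥
          8 * (∑ i, ∑ j, (A i j 0) ^ 2) * (h ^ 4).trace - 8 * ((h ^ 3).trace) ^ 2
            - C * Real.sqrt (∑ i, ∑ j, ∑ α, (A i j α) ^ 2) ^ 5
              * Real.sqrt
                  (∑ i, ∑ j, ∑ α ∈ Finset.univ.filter (· ≠ (0 : Fin (k + 1))),
                    (A i j α) ^ 2) := by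
  have hn' : (0 : ℝ) < n := by exact_mod_cast hn
  refine ⟨288 * n ^ 6 * (k + 1), by positivity, ?_⟩
  intro A hA _ _ h E
  set a := Real.sqrt (∑ i, ∑ j, ∑ α, (A i j α) ^ 2) with ha_def
  set s := Finset.univ.filter (· ≠ (0 : Fin (k + 1))) with hs
  set b := Real.sqrt (∑ i, ∑ j, ∑ α ∈ s, (A i j α) ^ 2) with hb_def
  have ha0 : 0 ≤ a := Real.sqrt_nonneg _
  have hb0 : 0 ≤ b := Real.sqrt_nonneg _
  have hba : b ≤ a := by
    apply Real.sqrt_le_sqrt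
    refine Finset.sum_le_sum fun i _ => Finset.sum_le_sum fun j _ => ?_
    exact Finset.sum_le_sum_of_subset_of_nonneg (Finset.subset_univ _) fun _ _ _ => sq_nonneg _
  have hA_le : ∀ α i j, |A i j α| ≤ a := fun α i j =>
    abs_le_sqrt_sum A Finset.univ i j (Finset.mem_univ α)
  have hA_hat_le : ∀ β ∈ s, ∀ i j, |A i j β| ≤ b := fun β hβ i j => abs_le_sqrt_sum A s i j hβ
  let F : Fin n → Fin n → Fin n → Fin n → ℝ := fun K L I J => ∑ p, simonsTerm A K L I J p 0
  have hE0 : ∀ K L I J, F K L I J ^ 2 - 288 * n ^ 2 * (k + 1) * a ^ 5 * b ≤ E K L I J 0 ^ 2 := by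
    intro K L I J
    let R : ℝ := ∑ p, ∑ β ∈ s, simonsTerm A K L I J p β
    have hsplit : E K L I J 0 = F K L I J + R := by
      change ∑ p, ∑ β, simonsTerm A K L I J p β = _
      rw [← Finset.sum_add_distrib]
      refine Finset.sum_congr rfl fun p _ => ?_
      rw [hs, Finset.filter_ne', Finset.add_sum_erase _ _ (Finset.mem_univ 0)]
    have hF : |F K L I J| ≤ n * (12 * (a * a * a)) := by
      refine (Finset.abs_sum_le_sum_abs _ _).trans ?_
      refine (Finset.sum_le_card_nsmul _ _ _ fun p _ =>
        abs_simonsTerm_le A K L I J p 0 (hA_le 0) (hA_le 0)).trans ?_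
      simp
    have hR : |R| ≤ n * ((k + 1) * (12 * (b * a * a))) := by
      have hin : ∀ p, |∑ β ∈ s, simonsTerm A K L I J p β| ≤ (k + 1) * (12 * (b * a * a)) := by
        intro p
        refine (Finset.abs_sum_le_sum_abs _ _).trans ?_
        refine (Finset.sum_le_card_nsmul _ _ (12 * (b * a * a)) fun β hβ => ?_).trans ?_
        · refine (abs_simonsTerm_le A K L I J p β (hA_hat_le β hβ) (hA_le 0)).trans ?_
          gcongr
        · rw [nsmul_eq_mul]
          have hcard : (s.card : ℝ) ≤ k + 1 := by
            have := Finset.card_le_univ s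
            rw [Fintype.card_fin] at this
            exact_mod_cast this
          gcongr
      refine (Finset.abs_sum_le_sum_abs _ _).trans ?_
      refine (Finset.sum_le_card_nsmul _ _ _ fun p _ => hin p).trans ?_
      simp
    have hFR : |F K L I J| * |R| ≤
        (n * (12 * (a * a * a))) * (n * ((k + 1) * (12 * (b * a * a)))) :=
      mul_le_mul hF hR (abs_nonneg _) (by positivity)
    rw [← abs_mul] at hFR
    have := neg_abs_le (F K L I J * R)
    rw [hsplit]
    nlinarith [sq_nonneg R]
  have hFsum : ∑ K, ∑ L, ∑ I, ∑ J, F K L I J ^ 2 =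
      8 * (∑ i, ∑ j, (A i j 0) ^ 2) * (h ^ 4).trace - 8 * ((h ^ 3).trace) ^ 2 := by
    rw [trace_pow_four_of_symm (fun i j => A i j 0) fun i j => hA i j 0,
      trace_pow_three_of_symm (fun i j => A i j 0) fun i j => hA i j 0,
      ← sum_sq_antisymm (fun i j => A i j 0) fun i j => ∑ p, A i p 0 * A j p 0]
    simp only [F, sum_simonsTerm_zero A hA]
  have hlow : ∑ K, ∑ L, ∑ I, ∑ J, (F K L I J ^ 2 - 288 * n ^ 2 * (k + 1) * a ^ 5 * b) ≤
      ∑ K, ∑ L, ∑ I, ∑ J, ∑ α, (E K L I J α) ^ 2 := by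
    refine Finset.sum_le_sum fun K _ => Finset.sum_le_sum fun L _ => Finset.sum_le_sum fun I _ =>
      Finset.sum_le_sum fun J _ => (hE0 K L I J).trans ?_
    exact Finset.single_le_sum (f := fun α => E K L I J α ^ 2) (fun _ _ => sq_nonneg _)
      (Finset.mem_univ 0)
  simp only [Finset.sum_sub_distrib, hFsum] at hlow
  simp only [Finset.sum_const, Finset.card_univ, Fintype.card_fin, nsmul_eq_mul] at hlow
  linarith
end

section
/- For every natural number n ≥ 2 and all real numbers ε₀, ε, Λ > 0 with ε₀ < 4/(3n), there exists a constant C > 0, depending only on n, ε₀, ε, Λ, with the following property. Let h be a real symmetric n×n matrix with eigenvalues λ_1 ≤ … ≤ λ_n and H := λ_1 + … + λ_n, let â ≥ 0 be a real number, and set |h|² := tr(h²), |A|² := |h|² + â². Assume H > 0, |A|² ≤ (4/(3n) − ε₀)·H², and λ_1 < −ε·w + Λ·v, where w := ((4/(3n) − ε₀/2)·H² − |A|²)^{1/2} and v := â²/H. Then tr(h²)·tr(h⁴) − tr(h³)² ≥ C⁻¹·|h|²·|A|⁴ − C·|A|⁵·â. -/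
/-!
Write `x` for the eigenvalues. By the Lagrange identity,
`tr(h²) tr(h⁴) − tr(h³)²` is half the sum of `x i ^ 2 * x j ^ 2 * (x i - x j) ^ 2` over all pairs
`(i, j)`; in particular it is nonnegative and at least half of any single term. The pinching gives
`w ≥ √(ε₀/2) H` and `|A| ≤ H`. Put `c = ε √(ε₀/2) / 2`.

* If `aHat` is at least a fixed multiple of `H`, the error term `C |A|⁵ aHat` absorbs
  `C⁻¹ |h|² |A|⁴`, and nonnegativity of the left-hand side suffices.
* Otherwise `Λ v ≤ c H`, so `λ₁ < -c H`. Some eigenvalue is at least `H / n`, and the term of the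
  Lagrange identity for these two eigenvalues is at least a constant times `H⁶ ≥ |h|² |A|⁴`.
-/

lemma trace_pow_eq_sum_eigenvalues {n : ℕ} {h : Matrix (Fin n) (Fin n) ℝ} (hh : h.IsHermitian)
    (k : ℕ) : (h ^ k).trace = ∑ i, hh.eigenvalues i ^ k := by
  conv_lhs => rw [hh.spectral_theorem, ← map_pow, Unitary.conjStarAlgAut_apply,
    Matrix.trace_mul_comm, ← mul_assoc]
  simp [Matrix.diagonal_pow, Matrix.trace_diagonal]

/-- Lagrange identity for the vectors `(x i)` and `(x i ^ 2)`. -/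
lemma two_mul_power_sum_defect {ι : Type*} [Fintype ι] (x : ι → ℝ) :
    2 * ((∑ i, x i ^ 2) * (∑ i, x i ^ 4) - (∑ i, x i ^ 3) ^ 2)
      = ∑ i, ∑ j, x i ^ 2 * x j ^ 2 * (x i - x j) ^ 2 := by
  have expand : ∀ i j, x i ^ 2 * x j ^ 2 * (x i - x j) ^ 2
      = x i ^ 4 * x j ^ 2 + x i ^ 2 * x j ^ 4 - 2 * (x i ^ 3 * x j ^ 3) := fun i j => by ring
  simp only [expand, Finset.sum_sub_distrib, Finset.sum_add_distrib, ← Finset.mul_sum,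
    ← Finset.sum_mul]
  ring

lemma term_le_two_mul_power_sum_defect {ι : Type*} [Fintype ι] (x : ι → ℝ) (i j : ι) :
    x i ^ 2 * x j ^ 2 * (x i - x j) ^ 2
      ≤ 2 * ((∑ i, x i ^ 2) * (∑ i, x i ^ 4) - (∑ i, x i ^ 3) ^ 2) := by
  rw [two_mul_power_sum_defect]
  calc x i ^ 2 * x j ^ 2 * (x i - x j) ^ 2
      ≤ ∑ j, x i ^ 2 * x j ^ 2 * (x i - x j) ^ 2 :=
        Finset.single_le_sum (f := fun j => x i ^ 2 * x j ^ 2 * (x i - x j) ^ 2)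
          (fun _ _ => by positivity) (Finset.mem_univ j)
    _ ≤ _ := Finset.single_le_sum (f := fun i => ∑ j, x i ^ 2 * x j ^ 2 * (x i - x j) ^ 2)
          (fun _ _ => Finset.sum_nonneg fun _ _ => by positivity) (Finset.mem_univ i)

/-- Pointwise algebraic inequality from the proof of the Poincaré-type proposition:
for a real symmetric matrix `h` with ordered eigenvalues `λ_1 ≤ … ≤ λ_n`,
`H = Σ λ_i > 0`, `aHat ≥ 0`, `|A|² = |h|² + aHat²` with the quadratic pinching
`|A|² ≤ (4/(3n) − ε₀) H²` and `λ_1 < −ε·w + Λ·v` where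
`w = ((4/(3n) − ε₀/2)H² − |A|²)^{1/2}` and `v = aHat²/H`, one has
`tr(h²)·tr(h⁴) − tr(h³)² ≥ C⁻¹·|h|²·|A|⁴ − C·|A|⁵·aHat`. -/
theorem poincare_pointwise_inequality (n : ℕ) (hn : 2 ≤ n) (ε₀ ε Λ : ℝ)
    (hε₀ : 0 < ε₀) (hε : 0 < ε) (hΛ : 0 < Λ) (hε₀' : ε₀ < 4 / (3 * (n : ℝ))) :
    ∃ C : ℝ, 0 < C ∧
      ∀ (h : Matrix (Fin n) (Fin n) ℝ) (hh : h.IsHermitian) (lam : Fin n → ℝ),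
        Monotone lam →
        (∃ σ : Equiv.Perm (Fin n), lam = hh.eigenvalues ∘ σ) →
        ∀ aHat : ℝ, 0 ≤ aHat →
        0 < ∑ i, lam i →
        (h ^ 2).trace + aHat ^ 2 ≤ (4 / (3 * (n : ℝ)) - ε₀) * (∑ i, lam i) ^ 2 →
        lam ⟨0, by omega⟩ <
          -ε * Real.sqrt ((4 / (3 * (n : ℝ)) - ε₀ / 2) * (∑ i, lam i) ^ 2
              - ((h ^ 2).trace + aHat ^ 2))
            + Λ * (aHat ^ 2 / (∑ i, lam i)) →
        (h ^ 2).trace * (h ^ 4).trace - ((h ^ 3).trace) ^ 2 ≥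
          C⁻¹ * (h ^ 2).trace * ((h ^ 2).trace + aHat ^ 2) ^ 2
            - C * (((h ^ 2).trace + aHat ^ 2) ^ 2
                * Real.sqrt ((h ^ 2).trace + aHat ^ 2)) * aHat := by
  set c : ℝ := ε * √(ε₀ / 2) / 2 with hc
  have hcpos : 0 < c := by positivity
  have hn' : (2 : ℝ) ≤ n := by exact_mod_cast hn
  -- `C ≥ 1` and `C ≥ Λ / c` make `C * aHat < H` imply `Λ v ≤ c H`; the last summand makes `C⁻¹` at
  -- most the constant in front of `H ^ 6` in the second case.
  set C : ℝ := 1 + Λ / c + 2 * n ^ 4 / c ^ 2 with hC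
  have hA0 : 0 ≤ Λ / c := by positivity
  have hB0 : 0 ≤ 2 * (n : ℝ) ^ 4 / c ^ 2 := by positivity
  have hC1 : 1 ≤ C := by linarith
  have hCpos : 0 < C := by linarith
  have hCΛ : Λ ≤ C * c := (div_le_iff₀ hcpos).1 (by linarith)
  have hCn : 2 * (n : ℝ) ^ 4 ≤ C * c ^ 2 := (div_le_iff₀ (by positivity)).1 (by linarith)
  refine ⟨C, hCpos, ?_⟩
  rintro h hh lam - ⟨σ, hσ⟩ a ha hH hpinch hlam
  have htr : ∀ k : ℕ, (h ^ k).trace = ∑ i, lam i ^ k := fun k => by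
    rw [trace_pow_eq_sum_eigenvalues hh, hσ]
    exact (Equiv.sum_comp σ fun i => hh.eigenvalues i ^ k).symm
  rw [htr] at hpinch hlam
  simp only [htr]
  set H := ∑ i, lam i with hHdef
  set S := ∑ i, lam i ^ 2 with hSdef
  have hS : 0 ≤ S := Finset.sum_nonneg fun _ _ => sq_nonneg _
  have hterm := term_le_two_mul_power_sum_defect lam
  rw [← hSdef] at hterm
  set D := S * (∑ i, lam i ^ 4) - (∑ i, lam i ^ 3) ^ 2 with hDdef
  set Q := S + a ^ 2 with hQdef
  have hQ : 0 ≤ Q := by positivity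
  have hSQ : S ≤ Q := by rw [hQdef]; linarith [sq_nonneg a]
  have hK : 4 / (3 * (n : ℝ)) ≤ 1 := by
    rw [div_le_one (by positivity)]; linarith
  have hQH : Q ≤ H ^ 2 := by nlinarith [sq_nonneg H]
  have hsq : √Q ^ 2 = Q := Real.sq_sqrt hQ
  have hsH : √Q ≤ H := Real.sqrt_le_iff.2 ⟨hH.le, hQH⟩
  have hs0 : 0 ≤ √Q := Real.sqrt_nonneg _
  by_cases hcase : H ≤ C * a
  · have hD : 0 ≤ D := by
      have := hterm ⟨0, by omega⟩ ⟨0, by omega⟩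
      simp only [sub_self] at this
      linarith
    have h1 : C⁻¹ * S * Q ^ 2 ≤ C * (Q ^ 2 * √Q) * a :=
      calc C⁻¹ * S * Q ^ 2 ≤ 1 * Q * Q ^ 2 := by
            gcongr
            exact inv_le_one_of_one_le₀ hC1
        _ = Q ^ 2 * √Q * √Q := by rw [mul_assoc (Q ^ 2), ← sq √Q, hsq]; ring
        _ ≤ Q ^ 2 * √Q * (C * a) := by gcongr; exact hsH.trans hcase
        _ = C * (Q ^ 2 * √Q) * a := by ring
    linarith
  · push Not at hcase
    have haH : a ≤ H := by nlinarith
    have hv : Λ * (a ^ 2 / H) ≤ c * H := by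
      rw [← mul_div_assoc, div_le_iff₀ hH]
      calc Λ * a ^ 2 ≤ C * c * a ^ 2 := by gcongr
        _ = c * (C * a) * a := by ring
        _ ≤ c * H * H := by gcongr
    have hw : √(ε₀ / 2) * H ≤ √((4 / (3 * (n : ℝ)) - ε₀ / 2) * H ^ 2 - Q) := by
      apply Real.le_sqrt_of_sq_le
      rw [mul_pow, Real.sq_sqrt (by positivity)]
      linarith
    have hlow : c * H ≤ -lam ⟨0, by omega⟩ := by
      have := mul_le_mul_of_nonneg_left hw hε.le
      have h2 : ε * (√(ε₀ / 2) * H) = 2 * (c * H) := by rw [hc]; ring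
      linarith
    obtain ⟨j, hj⟩ : ∃ j, H / n ≤ lam j := by
      by_contra! hcon
      have : H < ∑ _i : Fin n, H / n :=
        Finset.sum_lt_sum_of_nonempty ⟨⟨0, by omega⟩, Finset.mem_univ _⟩ fun i _ => hcon i
      rw [Finset.sum_const, Finset.card_univ, Fintype.card_fin, nsmul_eq_mul,
        mul_div_cancel₀ _ (by positivity)] at this
      exact lt_irrefl _ this
    have hcH : 0 < c * H := by positivity
    have hnH : 0 < H / n := by positivity
    have hD : (c * H) ^ 2 * (H / n) ^ 2 * (H / n) ^ 2 ≤ 2 * D := by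
      refine le_trans ?_ (hterm ⟨0, by omega⟩ j)
      rw [← neg_sq (lam ⟨0, _⟩), ← neg_sq (lam ⟨0, _⟩ - lam j)]
      gcongr
      linarith
    have hD' : c ^ 2 / n ^ 4 * H ^ 6 ≤ 2 * D := by
      refine le_trans (le_of_eq ?_) hD
      field_simp
    have hCinv : C⁻¹ ≤ c ^ 2 / (2 * n ^ 4) := by
      rw [inv_le_comm₀ hCpos (by positivity), inv_div]
      linarith
    have h1 : C⁻¹ * S * Q ^ 2 ≤ D :=
      calc C⁻¹ * S * Q ^ 2 ≤ c ^ 2 / (2 * n ^ 4) * H ^ 2 * (H ^ 2) ^ 2 := by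
            gcongr
            exact hSQ.trans hQH
        _ = c ^ 2 / n ^ 4 * H ^ 6 / 2 := by field_simp
        _ ≤ D := by linarith
    have h3 : 0 ≤ C * (Q ^ 2 * √Q) * a := by positivity
    linarith
end

section
/- Let X be a nonempty compact topological space, T > 0, and f : X × [0,T) → ℝ a continuous nonnegative function. Assume the type II condition: for every K > 0 there exist y ∈ X and τ ∈ [0,T) with (T−τ)·f(y,τ) ≥ K. Let (t̃_j) be a sequence in (0,T) with t̃_j → T, and for each j let (x_j, t_j) ∈ X × [0, t̃_j] be a point at which the function (x,t) ↦ (t̃_j − t)·f(x,t) attains its maximum over X × [0, t̃_j]. Then (t̃_j − t_j)·f(x_j, t_j) → ∞ and t_j → T as j → ∞. -/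
/-!
A type II point `(y, τ)` with `(T - τ) * f y τ` large competes in the maximization as soon as
`tt j > τ`, and `(tt j - τ) * f y τ` tends to `(T - τ) * f y τ`; hence the maxima diverge.
On `X × [0, a]` with `a < T`, compactness bounds `f`, so a maximum attained at a time `t j ≤ a`
is bounded independently of `j`; divergence therefore forces `t j > a` eventually.
-/

open Filter

/-- Point-selection for type II singularities: if `f ≥ 0` is continuous on
`X × [0,T)` (`X` compact nonempty), satisfies the type II condition
(`∀ K > 0, ∃ (y,τ), (T−τ)·f(y,τ) ≥ K`), and for a sequence `t̃_j → T` in `(0,T)`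
the points `(x_j, t_j)` maximize `(x,t) ↦ (t̃_j − t)·f(x,t)` over `X × [0, t̃_j]`,
then `(t̃_j − t_j)·f(x_j,t_j) → ∞` and `t_j → T`. -/
theorem type_II_point_selection (X : Type*) [TopologicalSpace X] [CompactSpace X]
    [Nonempty X] (T : ℝ) (hT : 0 < T) (f : X → ℝ → ℝ)
    (hcont : ContinuousOn (fun p : X × ℝ => f p.1 p.2) (Set.univ ×ˢ Set.Ico 0 T))
    (hnonneg : ∀ x : X, ∀ s ∈ Set.Ico (0 : ℝ) T, 0 ≤ f x s)
    (htypeII : ∀ K > (0 : ℝ), ∃ y : X, ∃ τ ∈ Set.Ico (0 : ℝ) T, K ≤ (T - τ) * f y τ)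
    (tt : ℕ → ℝ) (htt : ∀ j, tt j ∈ Set.Ioo 0 T) (htt' : Tendsto tt atTop (nhds T))
    (x : ℕ → X) (t : ℕ → ℝ) (ht : ∀ j, t j ∈ Set.Icc 0 (tt j))
    (hmax : ∀ j, ∀ x' : X, ∀ s ∈ Set.Icc (0 : ℝ) (tt j),
      (tt j - s) * f x' s ≤ (tt j - t j) * f (x j) (t j)) :
    Tendsto (fun j => (tt j - t j) * f (x j) (t j)) atTop atTop ∧
      Tendsto t atTop (nhds T) := by
  have hlim : Tendsto (fun j => (tt j - t j) * f (x j) (t j)) atTop atTop := by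
    refine tendsto_atTop.2 fun K => ?_
    obtain ⟨y, τ, hτ, hK⟩ := htypeII (|K| + 1) (by positivity)
    have hK' : K < (T - τ) * f y τ := by linarith [le_abs_self K]
    have hy : Tendsto (fun j => (tt j - τ) * f y τ) atTop (nhds ((T - τ) * f y τ)) :=
      (htt'.sub_const τ).mul_const _
    filter_upwards [hy.eventually (lt_mem_nhds hK'), htt'.eventually (lt_mem_nhds hτ.2)]
      with j hj hτj
    exact hj.le.trans (hmax j y τ ⟨hτ.1, hτj.le⟩)
  refine ⟨hlim, tendsto_order.2 ⟨fun a ha => ?_, fun b hb => ?_⟩⟩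
  · have hcpt : IsCompact ((Set.univ : Set X) ×ˢ Set.Icc (0 : ℝ) a) :=
      isCompact_univ.prod isCompact_Icc
    obtain ⟨C, hC⟩ := hcpt.bddAbove_image (hcont.mono
      (Set.prod_mono_right fun s hs => ⟨hs.1, hs.2.trans_lt ha⟩))
    filter_upwards [hlim.eventually_gt_atTop (T * C)] with j hj
    -- Were `t j ≤ a`, the maximum would be at most `T * C`.
    by_contra! hle
    have hf : f (x j) (t j) ≤ C :=
      hC ⟨(x j, t j), ⟨Set.mem_univ _, (ht j).1, hle⟩, rfl⟩
    have hf0 := hnonneg (x j) (t j) ⟨(ht j).1, hle.trans_lt ha⟩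
    have hT' : tt j - t j ≤ T := by linarith [(ht j).1, (htt j).2]
    exact hj.not_ge (mul_le_mul hT' hf hf0 hT.le)
  · exact Eventually.of_forall fun j => ((ht j).2.trans_lt (htt j).2).trans hb
end
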